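/- Let {A^k}_{k≥0} be a HOOI sequence with a block-nondegenerate limit point Ā. If f(A^{k₀}) = f(Ā) for some k₀, then there exists an integer K ≥ k₀ such that Aₙ^k(Aₙ^k)ᵀ = Aₙ^K(Aₙ^K)ᵀ for all n and all k ≥ K. -/

import Mathlib

open Matrix BigOperators Filter

def froSq {ι κ : Type*} [Fintype ι] [Fintype κ] (M : Matrix ι κ ℝ) : ℝ :=
  ∑ i, ∑ j, (M i j) ^ 2

noncomputable def fro {ι κ : Type*} [Fintype ι] [Fintype κ] (M : Matrix ι κ ℝ) : ℝ :=
  Real.sqrt (froSq M)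

noncomputable def eigList {m : ℕ} {κ : Type*} [Fintype κ] (Y : Matrix (Fin m) κ ℝ) : List ℝ :=
  ((((Finset.univ : Finset (Fin m)).val.map
      (fun j => (Matrix.isHermitian_mul_conjTranspose_self Y).eigenvalues j)).sort (· ≤ ·)).reverse)

noncomputable def sval {m : ℕ} {κ : Type*} [Fintype κ] (Y : Matrix (Fin m) κ ℝ) (i : ℕ) : ℝ :=
  Real.sqrt ((eigList Y).getD (i - 1) 0)

/-- Feasibility: every factor matrix has orthonormal columns. -/
def TFeas {N : ℕ} {I r : Fin N → ℕ}
    (A : (n : Fin N) → Matrix (Fin (I n)) (Fin (r n)) ℝ) : Prop :=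
  ∀ n, (A n)ᵀ * A n = 1

/-- `Gₙ(A) = unfoldₙ(X ×₁ A₁ᵀ ⋯ ×_{n−1} A_{n−1}ᵀ ×_{n+1} A_{n+1}ᵀ ⋯ ×_N A_Nᵀ)`. -/
noncomputable def Gmat {N : ℕ} {I r : Fin N → ℕ} (X : ((n : Fin N) → Fin (I n)) → ℝ)
    (A : (n : Fin N) → Matrix (Fin (I n)) (Fin (r n)) ℝ) (n : Fin N) :
    Matrix (Fin (I n)) ((m : {m : Fin N // m ≠ n}) → Fin (r m.1)) ℝ :=
  fun j c => ∑ idx : ((m : {m : Fin N // m ≠ n}) → Fin (I m.1)),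
    X (fun i => if h : i = n then Fin.cast (by rw [h]) j else idx ⟨i, h⟩) *
      ∏ m : {m : Fin N // m ≠ n}, A m.1 (idx m) (c m)

/-- `f(A) = ‖X ×₁ A₁ᵀ ⋯ ×_N A_Nᵀ‖_F²`. -/
noncomputable def fval {N : ℕ} {I r : Fin N → ℕ} (X : ((n : Fin N) → Fin (I n)) → ℝ)
    (A : (n : Fin N) → Matrix (Fin (I n)) (Fin (r n)) ℝ) : ℝ :=
  ∑ c : ((n : Fin N) → Fin (r n)),
    (∑ idx : ((n : Fin N) → Fin (I n)), X idx * ∏ n, A n (idx n) (c n)) ^ 2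

/-- A critical point: `Gₙ(A)Gₙ(A)ᵀAₙ = AₙAₙᵀGₙ(A)Gₙ(A)ᵀAₙ` for all `n`. -/
def Critical {N : ℕ} {I r : Fin N → ℕ} (X : ((n : Fin N) → Fin (I n)) → ℝ)
    (A : (n : Fin N) → Matrix (Fin (I n)) (Fin (r n)) ℝ) : Prop :=
  ∀ n, Gmat X A n * (Gmat X A n)ᵀ * A n =
    A n * (A n)ᵀ * (Gmat X A n * (Gmat X A n)ᵀ * A n)

/-- A block-wise maximizer. -/
def BlockMax {N : ℕ} {I r : Fin N → ℕ} (X : ((n : Fin N) → Fin (I n)) → ℝ)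
    (A : (n : Fin N) → Matrix (Fin (I n)) (Fin (r n)) ℝ) : Prop :=
  ∀ n, ∀ B : Matrix (Fin (I n)) (Fin (r n)) ℝ, Bᵀ * B = 1 →
    froSq (Bᵀ * Gmat X A n) ≤ froSq ((A n)ᵀ * Gmat X A n)

/-- Block-nondegeneracy: `σ_{rₙ}(Gₙ(A)) > σ_{rₙ+1}(Gₙ(A))` for all `n`. -/
def NonDeg {N : ℕ} {I r : Fin N → ℕ} (X : ((n : Fin N) → Fin (I n)) → ℝ)
    (A : (n : Fin N) → Matrix (Fin (I n)) (Fin (r n)) ℝ) : Prop :=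
  ∀ n, sval (Gmat X A n) (r n + 1) < sval (Gmat X A n) (r n)

/-- The hybrid tuple used in HOOI: the already-updated blocks `i < n` come from
`Anew`, the rest from `Aold`. -/
def hyb {N : ℕ} {I r : Fin N → ℕ}
    (Aold Anew : (n : Fin N) → Matrix (Fin (I n)) (Fin (r n)) ℝ) (n : Fin N) :
    (i : Fin N) → Matrix (Fin (I i)) (Fin (r i)) ℝ :=
  fun i => if i < n then Anew i else Aold i

/-- `Gₙ^k = unfoldₙ(X ×₁ (A₁^{k+1})ᵀ ⋯ ×_{n−1} (A_{n−1}^{k+1})ᵀ ×_{n+1} (A_{n+1}^k)ᵀ ⋯ ×_N (A_N^k)ᵀ)`. -/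
noncomputable def Gseq {N : ℕ} {I r : Fin N → ℕ} (X : ((n : Fin N) → Fin (I n)) → ℝ)
    (A : ℕ → (n : Fin N) → Matrix (Fin (I n)) (Fin (r n)) ℝ) (k : ℕ) (n : Fin N) :
    Matrix (Fin (I n)) ((m : {m : Fin N // m ≠ n}) → Fin (r m.1)) ℝ :=
  Gmat X (hyb (A k) (A (k + 1)) n) n

/-- A HOOI sequence. -/
def IsHOOI {N : ℕ} {I r : Fin N → ℕ} (X : ((n : Fin N) → Fin (I n)) → ℝ)
    (A : ℕ → (n : Fin N) → Matrix (Fin (I n)) (Fin (r n)) ℝ) : Prop :=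
  (∀ k, TFeas (A k)) ∧
  ∀ k (n : Fin N), ∀ B : Matrix (Fin (I n)) (Fin (r n)) ℝ, Bᵀ * B = 1 →
    froSq (Bᵀ * Gseq X A k n) ≤ froSq ((A (k + 1) n)ᵀ * Gseq X A k n)

/-- A greedy HOOI sequence. -/
def IsGreedyHOOI {N : ℕ} {I r : Fin N → ℕ} (X : ((n : Fin N) → Fin (I n)) → ℝ)
    (A : ℕ → (n : Fin N) → Matrix (Fin (I n)) (Fin (r n)) ℝ) : Prop :=
  IsHOOI X A ∧
  ∀ k (n : Fin N), ∀ B : Matrix (Fin (I n)) (Fin (r n)) ℝ, Bᵀ * B = 1 →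
    (∀ C : Matrix (Fin (I n)) (Fin (r n)) ℝ, Cᵀ * C = 1 →
      froSq (Cᵀ * Gseq X A k n) ≤ froSq (Bᵀ * Gseq X A k n)) →
    fro (A (k + 1) n - A k n) ≤ fro (B - A k n)

/-- `Ā` is a limit point of the sequence `{A^k}` (blockwise in Frobenius norm). -/
def IsLimitPt {N : ℕ} {I r : Fin N → ℕ}
    (A : ℕ → (n : Fin N) → Matrix (Fin (I n)) (Fin (r n)) ℝ)
    (Abar : (n : Fin N) → Matrix (Fin (I n)) (Fin (r n)) ℝ) : Prop :=
  ∃ φ : ℕ → ℕ, StrictMono φ ∧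
    ∀ n, Tendsto (fun k => fro (A (φ k) n - Abar n)) atTop (nhds 0)

/-- `‖A − B‖_F = √(∑ₙ ‖Aₙ − Bₙ‖_F²)` on tuples. -/
noncomputable def tdist {N : ℕ} {I r : Fin N → ℕ}
    (A B : (n : Fin N) → Matrix (Fin (I n)) (Fin (r n)) ℝ) : ℝ :=
  Real.sqrt (∑ n, froSq (A n - B n))

/-- A local maximizer of `f` over the feasible set. -/
def LocalMax {N : ℕ} {I r : Fin N → ℕ} (X : ((n : Fin N) → Fin (I n)) → ℝ)
    (A : (n : Fin N) → Matrix (Fin (I n)) (Fin (r n)) ℝ) : Prop :=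
  TFeas A ∧ ∃ ε > (0 : ℝ), ∀ B : (n : Fin N) → Matrix (Fin (I n)) (Fin (r n)) ℝ,
    TFeas B → tdist B A ≤ ε → fval X B ≤ fval X A

/-- A globally optimal solution. -/
def GlobalMax {N : ℕ} {I r : Fin N → ℕ} (X : ((n : Fin N) → Fin (I n)) → ℝ)
    (A : (n : Fin N) → Matrix (Fin (I n)) (Fin (r n)) ℝ) : Prop :=
  TFeas A ∧ ∀ B : (n : Fin N) → Matrix (Fin (I n)) (Fin (r n)) ℝ,
    TFeas B → fval X B ≤ fval X A

/-!
By Ky Fan, if the symmetric matrix `G Gᵀ` has an eigenvalue gap after the `r`-th eigenvalue, then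
all maximizers `B` of `‖Bᵀ G‖` over orthonormal `r`-frames share one projection `B Bᵀ`. Such a gap
at a level `t` is an open condition, since the numbers of eigenvalues above and below `t` are lower
semicontinuous. Hence every iterate close enough to `Ā` has a gap in each mode.

Along a HOOI sequence `f` increases, and it tends to `f(Ā)` along a subsequence, so it is constant
from `k₀` on. Take such an iterate `A^K` close to `Ā`. No block update changes `f`, so each old
block was already a maximizer and its projection survives the update. As `Gₙ Gₙᵀ` depends on the
other blocks only through their projections, the gaps survive as well, so nothing moves ever after.
-/

open scoped Topology

section Inertia

variable {n : Type*} [Fintype n]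

theorem eventually_forall_dotProduct_mulVec_pos {S : Matrix n n ℝ}
    (hS : ∀ x ≠ 0, 0 < x ⬝ᵥ S *ᵥ x) : ∀ᶠ T in 𝓝 S, ∀ x ≠ 0, 0 < x ⬝ᵥ T *ᵥ x := by
  have on_sphere : ∀ᶠ T in 𝓝 S, ∀ x ∈ Metric.sphere (0 : n → ℝ) 1, 0 < x ⬝ᵥ T *ᵥ x := by
    refine (isCompact_sphere _ _).eventually_forall_of_forall_eventually fun x hx => ?_
    have hcont : Continuous fun p : Matrix n n ℝ × (n → ℝ) => p.2 ⬝ᵥ p.1 *ᵥ p.2 := by fun_prop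
    exact hcont.continuousAt.eventually_const_lt (hS x (ne_zero_of_mem_unit_sphere ⟨x, hx⟩))
  filter_upwards [on_sphere] with T hT x hx
  have hunit := hT (‖x‖⁻¹ • x) (by simp [norm_smul, hx])
  rw [mulVec_smul, dotProduct_smul, smul_dotProduct, smul_eq_mul, smul_eq_mul] at hunit
  have hnorm : 0 < ‖x‖⁻¹ := inv_pos.2 (norm_pos_iff.2 hx)
  exact pos_of_mul_pos_right (pos_of_mul_pos_right hunit hnorm.le) hnorm.le

variable [DecidableEq n]

-- On the kernel of the projection of `L x` to the positive coordinates the form is nonpositive.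
theorem card_le_card_pos_of_dotProduct_mulVec_pos {k : Type*} [Fintype k] (d : n → ℝ)
    (L : Matrix n k ℝ) (hL : ∀ x ≠ 0, 0 < x ⬝ᵥ (Lᵀ * diagonal d * L) *ᵥ x) :
    Fintype.card k ≤ Fintype.card {i // 0 < d i} := by
  let proj : (k → ℝ) →ₗ[ℝ] ({i // 0 < d i} → ℝ) :=
    LinearMap.funLeft ℝ ℝ Subtype.val ∘ₗ L.mulVecLin
  have hproj : Function.Injective proj := by
    rw [← LinearMap.ker_eq_bot, LinearMap.ker_eq_bot']
    intro x hx
    by_contra hx0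
    refine (hL x hx0).not_ge ?_
    have hquad : x ⬝ᵥ (Lᵀ * diagonal d * L) *ᵥ x = ∑ i, d i * (L *ᵥ x) i ^ 2 := by
      rw [← mulVec_mulVec, ← mulVec_mulVec, dotProduct_mulVec, vecMul_transpose]
      simp only [dotProduct, mulVec_diagonal]
      exact Finset.sum_congr rfl fun i _ => by ring
    rw [hquad]
    refine Finset.sum_nonpos fun i _ => ?_
    by_cases hi : 0 < d i
    · have : (L *ᵥ x) i = 0 := congrFun hx ⟨i, hi⟩
      simp [this]
    · exact mul_nonpos_of_nonpos_of_nonneg (not_lt.1 hi) (sq_nonneg _)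
  simpa using LinearMap.finrank_le_finrank_of_injective hproj

theorem transpose_submatrix_mul_conj_diagonal_mul {k : Type*} [DecidableEq k] {V : Matrix n n ℝ}
    (hV : Vᵀ * V = 1) (d : n → ℝ) {e : k → n} (he : Function.Injective e) :
    (V.submatrix id e)ᵀ * (V * diagonal d * Vᵀ) * V.submatrix id e = diagonal (d ∘ e) := by
  calc (V.submatrix id e)ᵀ * (V * diagonal d * Vᵀ) * V.submatrix id e
      = (Vᵀ * (V * diagonal d * Vᵀ) * V).submatrix e e := rfl
    _ = ((Vᵀ * V) * diagonal d * (Vᵀ * V)).submatrix e e := by simp only [Matrix.mul_assoc]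
    _ = diagonal (d ∘ e) := by
      rw [hV, Matrix.one_mul, Matrix.mul_one, submatrix_diagonal _ _ he]

theorem eventually_card_pos_le_card_pos {V : Matrix n n ℝ} (hV : Vᵀ * V = 1) (d : n → ℝ) :
    ∀ᶠ B in 𝓝 (V * diagonal d * Vᵀ), ∀ (W : Matrix n n ℝ) (e : n → ℝ),
      B = W * diagonal e * Wᵀ → Fintype.card {i // 0 < d i} ≤ Fintype.card {i // 0 < e i} := by
  let U : Matrix n {i // 0 < d i} ℝ := V.submatrix id Subtype.val
  have hU : ∀ x ≠ 0, 0 < x ⬝ᵥ (Uᵀ * (V * diagonal d * Vᵀ) * U) *ᵥ x := by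
    rw [transpose_submatrix_mul_conj_diagonal_mul hV d Subtype.val_injective]
    exact fun x hx => (PosDef.diagonal fun i => i.2).dotProduct_mulVec_pos hx
  have hcont : Continuous fun B : Matrix n n ℝ => Uᵀ * B * U := by fun_prop
  filter_upwards [hcont.continuousAt.eventually (eventually_forall_dotProduct_mulVec_pos hU)]
    with B hB W e hBW
  refine card_le_card_pos_of_dotProduct_mulVec_pos e (Wᵀ * U) ?_
  simpa only [hBW, transpose_mul, transpose_transpose, Matrix.mul_assoc] using hB

end Inertia

section SpectralGap

variable {n : Type*} [Fintype n] [DecidableEq n]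

/-- The symmetric matrix `M` has a spectral gap at the level `t`, above which it has exactly `r`
eigenvalues, counted with multiplicity: `λ₁ ≥ ⋯ ≥ λ_r > t > λ_{r+1} ≥ ⋯`. This replaces the
condition `σ_r > σ_{r+1}` on a factor `G` of `M = G Gᵀ`. -/
structure HasSpectralGap (M : Matrix n n ℝ) (r : ℕ) (t : ℝ) : Prop where
  isHermitian : M.IsHermitian
  eigenvalues_ne : ∀ i, isHermitian.eigenvalues i ≠ t
  card_lt_eigenvalues : Fintype.card {i // t < isHermitian.eigenvalues i} = r

theorem exists_orthogonal_diagonalization {M : Matrix n n ℝ} (hM : M.IsHermitian) :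
    ∃ V : Matrix n n ℝ, Vᵀ * V = 1 ∧ M = V * diagonal hM.eigenvalues * Vᵀ := by
  refine ⟨hM.eigenvectorUnitary, ?_, ?_⟩
  · simpa [star_eq_conjTranspose] using UnitaryGroup.star_mul_self hM.eigenvectorUnitary
  · simpa [Unitary.conjStarAlgAut_apply, star_eq_conjTranspose, Function.comp_def]
      using hM.spectral_theorem

theorem smul_conj_diagonal_sub_smul_one {V : Matrix n n ℝ} (hV : Vᵀ * V = 1) (d : n → ℝ)
    (c t : ℝ) :
    c • (V * diagonal d * Vᵀ - t • 1) = V * diagonal (fun i => c * (d i - t)) * Vᵀ := by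
  have hdiag : diagonal (fun i => c * (d i - t)) = c • (diagonal d - t • (1 : Matrix n n ℝ)) := by
    rw [smul_one_eq_diagonal, diagonal_sub, ← diagonal_smul]
    rfl
  rw [hdiag, mul_smul_comm, smul_mul_assoc, mul_sub, sub_mul, mul_smul_comm, Matrix.mul_one,
    smul_mul_assoc, mul_eq_one_comm.1 hV]

theorem eventually_card_pos_mul_eigenvalues_sub_le {M : Matrix n n ℝ} (hM : M.IsHermitian)
    (c t : ℝ) :
    ∀ᶠ M' in 𝓝 M, ∀ hM' : M'.IsHermitian,
      Fintype.card {i // 0 < c * (hM.eigenvalues i - t)} ≤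
        Fintype.card {i // 0 < c * (hM'.eigenvalues i - t)} := by
  obtain ⟨V, hV, hMV⟩ := exists_orthogonal_diagonalization hM
  have hev := eventually_card_pos_le_card_pos hV fun i => c * (hM.eigenvalues i - t)
  rw [← smul_conj_diagonal_sub_smul_one hV, ← hMV] at hev
  have hcont : Continuous fun M' : Matrix n n ℝ => c • (M' - t • 1) := by fun_prop
  filter_upwards [hcont.continuousAt.eventually hev] with M' hM'ev hM'
  obtain ⟨W, hW, hMW⟩ := exists_orthogonal_diagonalization hM'
  refine hM'ev W _ ?_
  rw [← smul_conj_diagonal_sub_smul_one hW, ← hMW]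

theorem card_lt_add_card_gt_add_card_eq {ι α : Type*} [Fintype ι] [LinearOrder α] (f : ι → α)
    (t : α) :
    Fintype.card {i // t < f i} + Fintype.card {i // f i < t} + Fintype.card {i // f i = t} =
      Fintype.card ι := by
  simp only [Fintype.card_subtype, Finset.card_filter, ← Finset.sum_add_distrib]
  rw [← Finset.card_univ, Finset.card_eq_sum_ones]
  refine Finset.sum_congr rfl fun i _ => ?_
  rcases lt_trichotomy (f i) t with h | h | h
  · simp [h, h.ne, h.not_gt]
  · simp [h]
  · simp [h, h.ne', h.not_gt]

-- The numbers of eigenvalues above and below `t` cannot drop, and they already add up to `n`.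
theorem HasSpectralGap.eventually {M : Matrix n n ℝ} {r : ℕ} {t : ℝ} (h : HasSpectralGap M r t) :
    ∀ᶠ M' in 𝓝 M, M'.IsHermitian → HasSpectralGap M' r t := by
  filter_upwards [eventually_card_pos_mul_eigenvalues_sub_le h.isHermitian 1 t,
    eventually_card_pos_mul_eigenvalues_sub_le h.isHermitian (-1) t] with M' habove hbelow hM'
  specialize habove hM'
  specialize hbelow hM'
  simp only [one_mul, neg_one_mul, neg_sub, sub_pos] at habove hbelow
  have hcard := card_lt_add_card_gt_add_card_eq h.isHermitian.eigenvalues t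
  have hcard' := card_lt_add_card_gt_add_card_eq hM'.eigenvalues t
  have hnone : Fintype.card {i // h.isHermitian.eigenvalues i = t} = 0 :=
    Fintype.card_eq_zero_iff.2 (isEmpty_subtype _ |>.2 h.eigenvalues_ne)
  have hnone' : Fintype.card {i // hM'.eigenvalues i = t} = 0 := by lia
  have habove_eq := h.card_lt_eigenvalues
  exact ⟨hM', isEmpty_subtype _ |>.1 (Fintype.card_eq_zero_iff.1 hnone'), by lia⟩

end SpectralGap

section KyFan

theorem submatrix_one_mul_transpose {n k : Type*} [DecidableEq n] [Fintype k] {p : n → Prop}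
    [DecidablePred p] (e : k ≃ {i // p i}) :
    (1 : Matrix n n ℝ).submatrix id (Subtype.val ∘ e) *
        ((1 : Matrix n n ℝ).submatrix id (Subtype.val ∘ e))ᵀ =
      diagonal fun i => if p i then 1 else 0 := by
  ext i j
  change ∑ a, (1 : Matrix n n ℝ) i (e a) * (1 : Matrix n n ℝ) j (e a) = _
  by_cases hi : p i
  · rw [Finset.sum_eq_single_of_mem (e.symm ⟨i, hi⟩) (Finset.mem_univ _) fun a _ ha => ?_]
    · simp [one_apply, diagonal_apply, hi, eq_comm]
    · have hne : i ≠ e a := fun h => ha (e.symm_apply_eq.2 (Subtype.ext h)).symm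
      rw [one_apply_ne hne, zero_mul]
  · rw [Finset.sum_eq_zero fun a _ => ?_]
    · simp [diagonal_apply, hi]
    · have hne : i ≠ e a := fun h => hi (h ▸ (e a).2)
      rw [one_apply_ne hne, zero_mul]

variable {n : Type*} [Fintype n]

theorem isStarProjection_mul_transpose {k : Type*} [Fintype k] [DecidableEq k] {B : Matrix n k ℝ}
    (hB : Bᵀ * B = 1) : IsStarProjection (B * Bᵀ) where
  isIdempotentElem := by
    rw [IsIdempotentElem, Matrix.mul_assoc, ← Matrix.mul_assoc Bᵀ, hB, Matrix.one_mul]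
  isSelfAdjoint := by
    rw [IsSelfAdjoint, star_eq_conjTranspose, conjTranspose_eq_transpose_of_trivial,
      transpose_mul, transpose_transpose]

theorem trace_mul_transpose_of_orthonormal {k : Type*} [Fintype k] [DecidableEq k]
    {C : Matrix n k ℝ} (hC : Cᵀ * C = 1) : trace (C * Cᵀ) = Fintype.card k := by
  rw [trace_mul_comm, hC, trace_one]

variable [DecidableEq n]

theorem sum_erase_sq_of_isStarProjection {Q : Matrix n n ℝ} (hQ : IsStarProjection Q) (i : n) :
    ∑ j ∈ Finset.univ.erase i, Q i j ^ 2 = Q i i * (1 - Q i i) := by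
  have hsymm : ∀ j, Q j i = Q i j := fun j => by
    simpa using congrFun (congrFun hQ.isSelfAdjoint.star_eq i) j
  have hrow : ∑ j, Q i j ^ 2 = Q i i := by
    conv_rhs => rw [← hQ.isIdempotentElem.eq, Matrix.mul_apply]
    exact Finset.sum_congr rfl fun j _ => by rw [hsymm, sq]
  linarith [Finset.add_sum_erase Finset.univ (fun j => Q i j ^ 2) (Finset.mem_univ i)]

-- Since `Q` has diagonal entries in `[0, 1]`, no term of `∑ (d i - t) (χ i - Q i i)`, where `χ` is
-- the indicator of `{t < d}`, is negative; but the sum is `tr (D χ) - tr (D Q) ≤ 0`.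
theorem eq_diagonal_of_trace_mul_le {Q : Matrix n n ℝ} (hQ : IsStarProjection Q)
    {d : n → ℝ} {t : ℝ} (hd : ∀ i, d i ≠ t)
    (htrace : trace Q = trace (diagonal fun i => if t < d i then (1 : ℝ) else 0))
    (hle : trace (diagonal d * diagonal fun i => if t < d i then (1 : ℝ) else 0) ≤
      trace (diagonal d * Q)) :
    Q = diagonal fun i => if t < d i then (1 : ℝ) else 0 := by
  set χ : n → ℝ := fun i => if t < d i then 1 else 0 with hχ
  have hvariance : ∀ i, 0 ≤ Q i i * (1 - Q i i) := fun i =>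
    sum_erase_sq_of_isStarProjection hQ i ▸ Finset.sum_nonneg fun j _ => sq_nonneg (Q i j)
  have hterm : ∀ i, 0 ≤ (d i - t) * (χ i - Q i i) := by
    intro i
    simp only [hχ]
    split_ifs with hi
    · exact mul_nonneg (by linarith) (by nlinarith [hvariance i])
    · exact mul_nonneg_of_nonpos_of_nonpos (by linarith) (by nlinarith [hvariance i])
  have hsum : ∑ i, (d i - t) * (χ i - Q i i) ≤ 0 := by
    simp only [trace, diag_apply, diagonal_mul, diagonal_apply_eq] at htrace hle
    simp only [sub_mul, mul_sub, Finset.sum_sub_distrib, ← Finset.mul_sum, htrace]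
    linarith
  have hdiag : ∀ i, Q i i = χ i := fun i => by
    have hzero := (Finset.sum_eq_zero_iff_of_nonneg fun i _ => hterm i).1
      (hsum.antisymm (Finset.sum_nonneg fun i _ => hterm i)) i (Finset.mem_univ i)
    exact (sub_eq_zero.1 ((mul_eq_zero.1 hzero).resolve_left (sub_ne_zero.2 (hd i)))).symm
  ext i j
  obtain rfl | hij := eq_or_ne i j
  · rw [hdiag, diagonal_apply_eq]
  · have hoff : ∑ j ∈ Finset.univ.erase i, Q i j ^ 2 = 0 := by
      rw [sum_erase_sq_of_isStarProjection hQ, hdiag]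
      simp only [hχ]
      split_ifs <;> ring
    rw [diagonal_apply_ne _ hij]
    exact pow_eq_zero_iff two_ne_zero |>.1 <|
      (Finset.sum_eq_zero_iff_of_nonneg fun j _ => sq_nonneg (Q i j)).1 hoff j (by simp [hij.symm])

theorem exists_frame_conj_eq_diagonal {V : Matrix n n ℝ} (hV : Vᵀ * V = 1) {p : n → Prop}
    [DecidablePred p] {r : ℕ} (hp : Fintype.card {i // p i} = r) :
    ∃ U : Matrix n (Fin r) ℝ, Uᵀ * U = 1 ∧
      (Vᵀ * U) * (Vᵀ * U)ᵀ = diagonal fun i => if p i then 1 else 0 := by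
  have e : Fin r ≃ {i // p i} := (Fintype.equivFinOfCardEq hp).symm
  refine ⟨V.submatrix id (Subtype.val ∘ e), ?_, ?_⟩
  · change (Vᵀ * V).submatrix (Subtype.val ∘ e) (Subtype.val ∘ e) = 1
    rw [hV, submatrix_one _ (Subtype.val_injective.comp e.injective)]
  · rw [← submatrix_one_mul_transpose e, ← hV]
    rfl

theorem conj_mul_mul_transpose {k : Type*} [Fintype k] {V : Matrix n n ℝ} (hV : Vᵀ * V = 1)
    (C : Matrix n k ℝ) : V * ((Vᵀ * C) * (Vᵀ * C)ᵀ) * Vᵀ = C * Cᵀ := by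
  calc V * ((Vᵀ * C) * (Vᵀ * C)ᵀ) * Vᵀ = (V * Vᵀ) * (C * Cᵀ) * (V * Vᵀ) := by
        simp only [transpose_mul, transpose_transpose, Matrix.mul_assoc]
    _ = C * Cᵀ := by rw [mul_eq_one_comm.1 hV, Matrix.one_mul, Matrix.mul_one]

theorem transpose_mul_mul_self_of_orthogonal {k : Type*} [DecidableEq k] {V : Matrix n n ℝ}
    (hV : Vᵀ * V = 1) {C : Matrix n k ℝ} (hC : Cᵀ * C = 1) : (Vᵀ * C)ᵀ * (Vᵀ * C) = 1 := by
  rw [transpose_mul, transpose_transpose, Matrix.mul_assoc, ← Matrix.mul_assoc V,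
    mul_eq_one_comm.1 hV, Matrix.one_mul, hC]

theorem HasSpectralGap.exists_frame_unique_of_trace_le {M : Matrix n n ℝ} {r : ℕ} {t : ℝ}
    (h : HasSpectralGap M r t) :
    ∃ U : Matrix n (Fin r) ℝ, Uᵀ * U = 1 ∧ ∀ C : Matrix n (Fin r) ℝ, Cᵀ * C = 1 →
      trace (M * (U * Uᵀ)) ≤ trace (M * (C * Cᵀ)) → C * Cᵀ = U * Uᵀ := by
  obtain ⟨V, hV, hM⟩ := exists_orthogonal_diagonalization h.isHermitian
  set d := h.isHermitian.eigenvalues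
  obtain ⟨U, hU, hVU⟩ := exists_frame_conj_eq_diagonal hV h.card_lt_eigenvalues
  have htrace : ∀ C : Matrix n (Fin r) ℝ,
      trace (M * (C * Cᵀ)) = trace (diagonal d * ((Vᵀ * C) * (Vᵀ * C)ᵀ)) := by
    intro C
    conv_lhs => rw [hM, Matrix.mul_assoc, Matrix.mul_assoc, trace_mul_comm]
    simp only [transpose_mul, transpose_transpose, Matrix.mul_assoc]
  refine ⟨U, hU, fun C hC hle => ?_⟩
  have hVC := transpose_mul_mul_self_of_orthogonal hV hC
  have hrank : trace ((Vᵀ * C) * (Vᵀ * C)ᵀ) =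
      trace (diagonal fun i => if t < d i then 1 else 0) := by
    rw [← hVU, trace_mul_transpose_of_orthonormal hVC,
      trace_mul_transpose_of_orthonormal (transpose_mul_mul_self_of_orthogonal hV hU)]
  rw [htrace, htrace, hVU] at hle
  rw [← conj_mul_mul_transpose hV C, ← conj_mul_mul_transpose hV U, hVU,
    eq_diagonal_of_trace_mul_le (isStarProjection_mul_transpose hVC) h.eigenvalues_ne hrank hle]

theorem HasSpectralGap.mul_transpose_eq_of_isMax {M : Matrix n n ℝ} {r : ℕ} {t : ℝ}
    (h : HasSpectralGap M r t) {B B' : Matrix n (Fin r) ℝ} (hB : Bᵀ * B = 1) (hB' : B'ᵀ * B' = 1)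
    (hmax : ∀ C : Matrix n (Fin r) ℝ, Cᵀ * C = 1 →
      trace (M * (C * Cᵀ)) ≤ trace (M * (B' * B'ᵀ)))
    (hle : trace (M * (B' * B'ᵀ)) ≤ trace (M * (B * Bᵀ))) : B' * B'ᵀ = B * Bᵀ := by
  obtain ⟨U, hU, hunique⟩ := h.exists_frame_unique_of_trace_le
  rw [hunique B' hB' (hmax U hU), hunique B hB ((hmax U hU).trans hle)]

end KyFan

section SingularValues

theorem countP_lt_eq_and_notMem_of_sortedGE {α : Type*} [LinearOrder α] {L : List α}
    (hL : L.SortedGE) {s : ℕ} {a t : α} (hlt : L.getD (s + 1) a < t) (hgt : t < L.getD s a) :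
    L.countP (t < ·) = s + 1 ∧ t ∉ L := by
  have hs : s < L.length := by
    by_contra! hs
    rw [List.getD_eq_default _ _ (by lia)] at hlt hgt
    exact hlt.asymm hgt
  have hhead : ∀ x ∈ L.take (s + 1), t < x := by
    intro x hx
    obtain ⟨i, hi, rfl⟩ := List.mem_take_iff_getElem.1 hx
    rw [List.getD_eq_getElem _ _ hs] at hgt
    exact hgt.trans_le (hL.getElem_ge_getElem_of_le (by lia))
  have htail : ∀ x ∈ L.drop (s + 1), x < t := by
    intro x hx
    obtain ⟨i, hi, rfl⟩ := List.mem_drop_iff_getElem.1 hx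
    rw [List.getD_eq_getElem _ _ (by lia)] at hlt
    exact (hL.getElem_ge_getElem_of_le (by lia)).trans_lt hlt
  rw [← List.take_append_drop (s + 1) L, List.countP_append,
    List.countP_eq_length.2 fun x hx => by simpa using hhead x hx,
    List.countP_eq_zero.2 fun x hx => by simpa using (htail x hx).le, List.length_take,
    List.mem_append]
  exact ⟨by lia, fun ht => ht.elim (fun h => (hhead t h).false) fun h => (htail t h).false⟩

variable {m : ℕ} {κ : Type*} [Fintype κ] (Y : Matrix (Fin m) κ ℝ)

theorem sortedGE_eigList : (eigList Y).SortedGE :=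
  List.sortedGE_reverse.2 (Multiset.pairwise_sort _ _).sortedLE

theorem coe_eigList : (eigList Y : Multiset ℝ) =
    Finset.univ.val.map (isHermitian_mul_conjTranspose_self Y).eigenvalues := by
  rw [eigList, Multiset.coe_reverse, Multiset.sort_eq]

theorem exists_hasSpectralGap_of_sval_lt {r : ℕ} (h : sval Y (r + 1) < sval Y r) :
    ∃ t, HasSpectralGap (Y * Yᵀ) r t := by
  obtain ⟨s, rfl⟩ : ∃ s, r = s + 1 :=
    Nat.exists_eq_succ_of_ne_zero fun hr => by simp [hr, sval] at h
  obtain ⟨t, hlt, hgt⟩ := exists_between (lt_of_not_ge fun hle => h.not_ge (Real.sqrt_le_sqrt hle))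
  obtain ⟨hcount, hmem⟩ := countP_lt_eq_and_notMem_of_sortedGE (sortedGE_eigList Y) hlt hgt
  rw [← Multiset.coe_countP, coe_eigList, Multiset.countP_map] at hcount
  rw [← Multiset.mem_coe, coe_eigList] at hmem
  rw [← conjTranspose_eq_transpose_of_trivial]
  refine ⟨t, isHermitian_mul_conjTranspose_self Y, fun i hi => hmem ?_, ?_⟩
  · exact Multiset.mem_map.2 ⟨i, Finset.mem_univ i, hi⟩
  · rw [Fintype.card_subtype]
    exact hcount

end SingularValues

theorem froSq_transpose_mul {m r κ : Type*} [Fintype m] [Fintype r] [Fintype κ] (B : Matrix m r ℝ)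
    (G : Matrix m κ ℝ) : froSq (Bᵀ * G) = trace (G * Gᵀ * (B * Bᵀ)) := by
  calc froSq (Bᵀ * G) = trace ((Bᵀ * G) * (Bᵀ * G)ᵀ) := by
        simp only [froSq, trace, diag_apply, Matrix.mul_apply (M := Bᵀ * G), transpose_apply, sq]
    _ = trace (Bᵀ * (G * Gᵀ * B)) := by
      simp only [transpose_mul, transpose_transpose, Matrix.mul_assoc]
    _ = trace (G * Gᵀ * (B * Bᵀ)) := by rw [trace_mul_comm, Matrix.mul_assoc]

theorem abs_apply_le_fro {ι κ : Type*} [Fintype ι] [Fintype κ] (M : Matrix ι κ ℝ) (i : ι) (j : κ) :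
    |M i j| ≤ fro M := by
  refine Real.abs_le_sqrt ?_
  calc M i j ^ 2 ≤ ∑ j, M i j ^ 2 :=
        Finset.single_le_sum (fun j _ => sq_nonneg (M i j)) (Finset.mem_univ j)
    _ ≤ froSq M := Finset.single_le_sum (f := fun i => ∑ j, M i j ^ 2)
        (fun i _ => Finset.sum_nonneg fun j _ => sq_nonneg (M i j)) (Finset.mem_univ i)

theorem tendsto_of_tendsto_fro_sub {α ι κ : Type*} [Fintype ι] [Fintype κ] {l : Filter α}
    {B : α → Matrix ι κ ℝ} {C : Matrix ι κ ℝ} (h : Tendsto (fun a => fro (B a - C)) l (𝓝 0)) :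
    Tendsto B l (𝓝 C) := by
  refine tendsto_pi_nhds.2 fun i => tendsto_pi_nhds.2 fun j => ?_
  rw [tendsto_iff_norm_sub_tendsto_zero]
  exact squeeze_zero (fun _ => norm_nonneg _) (fun a => abs_apply_le_fro (B a - C) i j) h

section Tensor

variable {N : ℕ} {I r : Fin N → ℕ} (X : ((n : Fin N) → Fin (I n)) → ℝ)

theorem Gmat_congr {A B : (n : Fin N) → Matrix (Fin (I n)) (Fin (r n)) ℝ} {n : Fin N}
    (h : ∀ m ≠ n, A m = B m) : Gmat X A n = Gmat X B n := by
  ext j c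
  refine Finset.sum_congr rfl fun p _ => congrArg _ (Finset.prod_congr rfl fun m _ => ?_)
  rw [h m.1 m.2]

theorem Gmat_mul_transpose_apply (A : (n : Fin N) → Matrix (Fin (I n)) (Fin (r n)) ℝ) (n : Fin N)
    (j j' : Fin (I n)) :
    (Gmat X A n * (Gmat X A n)ᵀ) j j' =
      ∑ p : ((m : {m : Fin N // m ≠ n}) → Fin (I m.1)),
      ∑ q : ((m : {m : Fin N // m ≠ n}) → Fin (I m.1)),
        (X (fun i => if h : i = n then Fin.cast (by rw [h]) j else p ⟨i, h⟩) *
        X (fun i => if h : i = n then Fin.cast (by rw [h]) j' else q ⟨i, h⟩)) *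
        ∏ m : {m : Fin N // m ≠ n}, (A m.1 * (A m.1)ᵀ) (p m) (q m) := by
  simp only [Matrix.mul_apply, transpose_apply, Finset.prod_univ_sum, Fintype.piFinset_univ, Gmat,
    Finset.sum_mul_sum]
  rw [Finset.sum_comm]
  refine Finset.sum_congr rfl fun p _ => ?_
  rw [Finset.sum_comm]
  refine Finset.sum_congr rfl fun q _ => ?_
  rw [Finset.mul_sum]
  refine Finset.sum_congr rfl fun c _ => ?_
  rw [Finset.prod_mul_distrib]
  ring

theorem Gmat_mul_transpose_congr {A B : (n : Fin N) → Matrix (Fin (I n)) (Fin (r n)) ℝ}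
    {n : Fin N} (h : ∀ m ≠ n, A m * (A m)ᵀ = B m * (B m)ᵀ) :
    Gmat X A n * (Gmat X A n)ᵀ = Gmat X B n * (Gmat X B n)ᵀ := by
  ext j j'
  rw [Gmat_mul_transpose_apply, Gmat_mul_transpose_apply]
  refine Finset.sum_congr rfl fun p _ => Finset.sum_congr rfl fun q _ =>
    congrArg _ (Finset.prod_congr rfl fun m _ => ?_)
  rw [h m.1 m.2]

theorem piSplitAt_symm_eq_dite (n : Fin N) (j : Fin (I n))
    (p : (m : {m : Fin N // m ≠ n}) → Fin (I m.1)) :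
    (Equiv.piSplitAt n fun i => Fin (I i)).symm (j, p) =
      fun i => if h : i = n then Fin.cast (by rw [h]) j else p ⟨i, h⟩ := by
  ext i
  by_cases h : i = n
  · subst h
    simp
  · simp [h]

theorem prod_piSplitAt_symm (A : (n : Fin N) → Matrix (Fin (I n)) (Fin (r n)) ℝ) (n : Fin N)
    (j : Fin (I n)) (p : (m : {m : Fin N // m ≠ n}) → Fin (I m.1)) (a : Fin (r n))
    (c : (m : {m : Fin N // m ≠ n}) → Fin (r m.1)) :
    ∏ i, A i ((Equiv.piSplitAt n fun i => Fin (I i)).symm (j, p) i)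
        ((Equiv.piSplitAt n fun i => Fin (r i)).symm (a, c) i) =
      A n j a * ∏ m : {m : Fin N // m ≠ n}, A m.1 (p m) (c m) := by
  rw [Fintype.prod_eq_mul_prod_subtype_ne _ n]
  congr 1
  · simp
  · exact Finset.prod_congr rfl fun m _ => by simp [m.2]

theorem fval_eq_froSq_transpose_mul_Gmat (A : (n : Fin N) → Matrix (Fin (I n)) (Fin (r n)) ℝ)
    (n : Fin N) : fval X A = froSq ((A n)ᵀ * Gmat X A n) := by
  rw [fval, froSq, ← Fintype.sum_prod_type',
    ← (Equiv.piSplitAt n fun i => Fin (r i)).symm.sum_comp]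
  refine Finset.sum_congr rfl fun ⟨a, c⟩ _ => congrArg (· ^ 2) ?_
  rw [← (Equiv.piSplitAt n fun i => Fin (I i)).symm.sum_comp, Fintype.sum_prod_type,
    Matrix.mul_apply]
  simp only [Gmat, transpose_apply, Finset.mul_sum, prod_piSplitAt_symm]
  simp only [piSplitAt_symm_eq_dite]
  exact Finset.sum_congr rfl fun j _ => Finset.sum_congr rfl fun p _ => mul_left_comm _ _ _

theorem continuous_fval : Continuous (fval (r := r) X) := by
  unfold fval
  fun_prop

theorem continuous_Gmat (n : Fin N) :
    Continuous fun A : (n : Fin N) → Matrix (Fin (I n)) (Fin (r n)) ℝ => Gmat X A n := by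
  refine continuous_matrix fun i j => ?_
  unfold Gmat
  fun_prop

end Tensor

section HOOI

variable {N : ℕ} {I r : Fin N → ℕ} {X : ((n : Fin N) → Fin (I n)) → ℝ}
  {A : ℕ → (n : Fin N) → Matrix (Fin (I n)) (Fin (r n)) ℝ}

/-- The tuple reached inside a sweep from `Aold` to `Anew` after `s` block updates. The cut `s` is
a natural number, unlike that of `hyb`, so that `s = N` is the completed sweep. -/
def partialSweep (Aold Anew : (n : Fin N) → Matrix (Fin (I n)) (Fin (r n)) ℝ) (s : ℕ) :
    (n : Fin N) → Matrix (Fin (I n)) (Fin (r n)) ℝ :=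
  fun n => if n < s then Anew n else Aold n

theorem partialSweep_zero (B C : (n : Fin N) → Matrix (Fin (I n)) (Fin (r n)) ℝ) :
    partialSweep B C 0 = B := by
  funext n
  simp [partialSweep]

theorem partialSweep_of_le (B C : (n : Fin N) → Matrix (Fin (I n)) (Fin (r n)) ℝ) {s : ℕ}
    (hs : N ≤ s) : partialSweep B C s = C :=
  funext fun n => if_pos (n.isLt.trans_le hs)

theorem fval_partialSweep (B C : (n : Fin N) → Matrix (Fin (I n)) (Fin (r n)) ℝ) (n : Fin N) :
    fval X (partialSweep B C n) = froSq ((B n)ᵀ * Gmat X (hyb B C n) n) := by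
  have hblock : partialSweep B C n n = B n := if_neg (lt_irrefl _)
  rw [fval_eq_froSq_transpose_mul_Gmat X _ n, hblock]
  rfl

theorem fval_partialSweep_succ (B C : (n : Fin N) → Matrix (Fin (I n)) (Fin (r n)) ℝ) (n : Fin N) :
    fval X (partialSweep B C (n + 1)) = froSq ((C n)ᵀ * Gmat X (hyb B C n) n) := by
  have hblock : partialSweep B C (n + 1) n = C n := if_pos (Nat.lt_succ_self _)
  rw [fval_eq_froSq_transpose_mul_Gmat X _ n, hblock]
  congr 2
  refine Gmat_congr X fun m hm => if_congr ?_ rfl rfl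
  rw [Nat.lt_succ_iff, Fin.val_fin_le, hm.le_iff_lt]

theorem IsHOOI.monotone_fval_partialSweep (hA : IsHOOI X A) (k : ℕ) :
    Monotone fun s => fval X (partialSweep (A k) (A (k + 1)) s) := by
  refine monotone_nat_of_le_succ fun s => ?_
  by_cases hs : s < N
  · have hupdate := hA.2 k ⟨s, hs⟩ _ (hA.1 k _)
    rwa [Gseq, ← fval_partialSweep, ← fval_partialSweep_succ] at hupdate
  · rw [partialSweep_of_le _ _ (not_lt.1 hs), partialSweep_of_le _ _ (by lia)]

theorem IsHOOI.monotone_fval (hA : IsHOOI X A) : Monotone fun k => fval X (A k) :=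
  monotone_nat_of_le_succ fun k => by
    simpa only [partialSweep_zero, partialSweep_of_le _ _ le_rfl]
      using hA.monotone_fval_partialSweep k (Nat.zero_le N)

theorem IsHOOI.froSq_update_le (hA : IsHOOI X A) {k : ℕ}
    (hval : fval X (A (k + 1)) ≤ fval X (A k)) (n : Fin N) :
    froSq ((A (k + 1) n)ᵀ * Gseq X A k n) ≤ froSq ((A k n)ᵀ * Gseq X A k n) := by
  have hmono := hA.monotone_fval_partialSweep k
  calc froSq ((A (k + 1) n)ᵀ * Gseq X A k n)
      = fval X (partialSweep (A k) (A (k + 1)) (n + 1)) := (fval_partialSweep_succ _ _ n).symm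
    _ ≤ fval X (partialSweep (A k) (A (k + 1)) N) := hmono n.isLt
    _ ≤ fval X (partialSweep (A k) (A (k + 1)) 0) := by
      rwa [partialSweep_of_le _ _ le_rfl, partialSweep_zero]
    _ ≤ fval X (partialSweep (A k) (A (k + 1)) n) := hmono (Nat.zero_le n)
    _ = froSq ((A k n)ᵀ * Gseq X A k n) := fval_partialSweep _ _ n

theorem IsHOOI.mul_transpose_succ_eq (hA : IsHOOI X A) {k : ℕ} {t : Fin N → ℝ}
    (hval : fval X (A (k + 1)) ≤ fval X (A k))
    (hgap : ∀ n, HasSpectralGap (Gmat X (A k) n * (Gmat X (A k) n)ᵀ) (r n) (t n)) (n : Fin N) :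
    A (k + 1) n * (A (k + 1) n)ᵀ = A k n * (A k n)ᵀ := by
  induction n using WellFoundedLT.induction with
  | ind n ih =>
    have hgram : Gseq X A k n * (Gseq X A k n)ᵀ = Gmat X (A k) n * (Gmat X (A k) n)ᵀ := by
      refine Gmat_mul_transpose_congr X fun m _ => ?_
      unfold hyb
      split_ifs with hm
      exacts [ih m hm, rfl]
    refine (hgap n).mul_transpose_eq_of_isMax (hA.1 k n) (hA.1 (k + 1) n) (fun C hC => ?_) ?_
    · simpa only [froSq_transpose_mul, hgram] using hA.2 k n C hC
    · simpa only [froSq_transpose_mul, hgram] using hA.froSq_update_le hval n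

theorem IsHOOI.mul_transpose_eq_of_le (hA : IsHOOI X A) {K : ℕ} {t : Fin N → ℝ}
    (hval : ∀ k ≥ K, fval X (A (k + 1)) ≤ fval X (A k))
    (hgap : ∀ n, HasSpectralGap (Gmat X (A K) n * (Gmat X (A K) n)ᵀ) (r n) (t n)) {k : ℕ}
    (hk : K ≤ k) (n : Fin N) : A k n * (A k n)ᵀ = A K n * (A K n)ᵀ := by
  induction k, hk using Nat.le_induction generalizing n with
  | base => rfl
  | succ k hk ih =>
    have hgap_k : ∀ n, HasSpectralGap (Gmat X (A k) n * (Gmat X (A k) n)ᵀ) (r n) (t n) :=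
      fun n => Gmat_mul_transpose_congr X (fun m _ => ih m) ▸ hgap n
    rw [hA.mul_transpose_succ_eq (hval k hk) hgap_k, ih]

theorem NonDeg.eventually_hasSpectralGap {B : (n : Fin N) → Matrix (Fin (I n)) (Fin (r n)) ℝ}
    (hB : NonDeg X B) :
    ∃ t : Fin N → ℝ, ∀ᶠ C in 𝓝 B,
      ∀ n, HasSpectralGap (Gmat X C n * (Gmat X C n)ᵀ) (r n) (t n) := by
  choose t ht using fun n => exists_hasSpectralGap_of_sval_lt _ (hB n)
  refine ⟨t, eventually_all.2 fun n => ?_⟩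
  have hcont := (continuous_Gmat (r := r) X n).matrix_mul (continuous_Gmat X n).matrix_transpose
  filter_upwards [hcont.continuousAt.eventually (ht n).eventually] with C hC
  exact hC (isHermitian_mul_conjTranspose_self _)

end HOOI

/-- If a HOOI sequence has a block-nondegenerate limit point `Ā`
and `f(A^{k₀}) = f(Ā)` for some `k₀`, then the projection matrices are eventually
constant. -/
theorem stmt18 {N : ℕ} {I r : Fin N → ℕ} (hr : ∀ n, r n ≤ I n)
    (X : ((n : Fin N) → Fin (I n)) → ℝ)
    (A : ℕ → (n : Fin N) → Matrix (Fin (I n)) (Fin (r n)) ℝ)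
    (hA : IsHOOI X A)
    (Abar : (n : Fin N) → Matrix (Fin (I n)) (Fin (r n)) ℝ)
    (hfeas : TFeas Abar) (hlim : IsLimitPt A Abar) (hnd : NonDeg X Abar)
    (k₀ : ℕ) (hk₀ : fval X (A k₀) = fval X Abar) :
    ∃ K : ℕ, k₀ ≤ K ∧ ∀ n, ∀ k ≥ K, A k n * (A k n)ᵀ = A K n * (A K n)ᵀ := by
  obtain ⟨φ, hφ, hfro⟩ := hlim
  have htendsto : Tendsto (fun j => A (φ j)) atTop (𝓝 Abar) :=
    tendsto_pi_nhds.2 fun n => tendsto_of_tendsto_fro_sub (hfro n)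
  have hle : ∀ k, fval X (A k) ≤ fval X Abar := hA.monotone_fval.ge_of_tendsto <|
    (tendsto_iff_tendsto_subseq_of_monotone hA.monotone_fval hφ.tendsto_atTop).2
      (((continuous_fval X).tendsto Abar).comp htendsto)
  have hval : ∀ k ≥ k₀, fval X (A (k + 1)) ≤ fval X (A k) := fun k hk =>
    (hle (k + 1)).trans (hk₀ ▸ hA.monotone_fval hk)
  obtain ⟨t, ht⟩ := hnd.eventually_hasSpectralGap
  obtain ⟨j, hgap, hj⟩ :=
    ((htendsto.eventually ht).and (hφ.tendsto_atTop.eventually_ge_atTop k₀)).exists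
  exact ⟨φ j, hj, fun n k hk =>
    hA.mul_transpose_eq_of_le (fun k hk => hval k (hj.trans hk)) hgap hk n⟩
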